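/- Fix an integer n ≥ 2, a prime ℓ, and a real number Δ ≥ 0. Suppose that for every ε > 0 there exists a constant C = C(nℓ, ε) such that for every integer D > 1 the number of degree-(nℓ) fields L with D_L = D is at most C·D^{Δ+ε}. Then for every ε > 0 there exists a constant C' = C'(n, ℓ, ε) such that every degree-n field K satisfies |Cl_K[ℓ]| ≤ C' · D_K^{ℓΔ + ε}. -/

import Mathlib

open NumberField Filter

-- The absolute value of the discriminant of an intermediate field `K` of `ℚ̄/ℚ`
-- (junk value `0` in the irrelevant case that `K/ℚ` is infinite-dimensional).
open scoped Classical in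
noncomputable def absDisc (K : IntermediateField ℚ (AlgebraicClosure ℚ)) : ℕ :=
  if h : FiniteDimensional ℚ K then
    letI : NumberField K := { to_charZero := inferInstance, to_finiteDimensional := h }
    (NumberField.discr K).natAbs
  else 0

/-- The cardinality `|Cl_K[m]|` of the `m`-torsion subgroup of the class group of `K`. -/
noncomputable def clTors (K : IntermediateField ℚ (AlgebraicClosure ℚ)) (m : ℕ) : ℕ :=
  Nat.card {x : ClassGroup (𝓞 K) // x ^ m = 1}

/-!
Let `x ≠ 1` be a class of `K` with `x ^ ℓ = 1`, represented by `I` with `I ^ ℓ = (b)`. Then `b` is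
not an `ℓ`-th power in `K`, so `L = K(γ)` with `γ ^ ℓ = b` has degree `ℓ` over `K`.

The discriminant of `L` is nearly determined by `K`. As `I 𝓞_L = (γ)`, the quotients `d = e / γ`
with `0 ≠ e ∈ I` generate the unit ideal of `𝓞_L`. Each of them is an `ℓ`-th root of an element of
`𝓞_K` and generates `L`, so the different of `L / K` contains `ℓ d ^ (ℓ - 1)`, the derivative at `d`
of its minimal polynomial. Hence the different contains `ℓ`, and `D_L = ℓ ^ j D_K ^ ℓ` for some
`j ≤ nℓ`.

A field `L` of degree `ℓ` over `K` arises from at most `ℓ` classes. Fix distinct embeddings `σ, τ`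
of `L` over `K`. For a radical `γ ∈ L`, the ratio `σ γ / τ γ` is an `ℓ`-th root of unity. If two
radicals give the same ratio, then `σ` and `τ` agree on their quotient, which therefore lies in `K`,
and the two classes coincide. So `|Cl_K[ℓ]|` is at most one plus `ℓ` times the number of fields of
degree `nℓ` with discriminant `ℓ ^ j D_K ^ ℓ`, `j ≤ nℓ`.
-/

open Module Polynomial
open scoped IntermediateField nonZeroDivisors

theorem map_eq_span_singleton_of_pow_eq {A B : Type*} [CommRing A] [CommRing B]
    [IsDedekindDomain B] [Algebra A B] {m : ℕ} (hm : m ≠ 0) {I : Ideal A} {b : A} {γ : B}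
    (hI : I ^ m = Ideal.span {b}) (hγ : γ ^ m = algebraMap A B b) :
    I.map (algebraMap A B) = Ideal.span {γ} := by
  apply pow_left_injective hm
  simp only [← Ideal.map_pow, hI, Ideal.map_span, Set.image_singleton, Ideal.span_singleton_pow, hγ]

section Different

variable {A K L B : Type*} [CommRing A] [IsDomain A] [IsIntegrallyClosed A] [Field K] [Algebra A K]
  [IsFractionRing A K] [Field L] [Algebra K L] [Algebra A L] [IsScalarTower A K L]
  [FiniteDimensional K L]

theorem minpoly_eq_X_pow_finrank_sub_C {a : A} {x : L} (hx : x ^ finrank K L = algebraMap A L a)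
    (htop : K⟮x⟯ = ⊤) : minpoly A x = X ^ finrank K L - C a := by
  have hroot : x ^ finrank K L = algebraMap K L (algebraMap A K a) := by
    rw [hx, ← IsScalarTower.algebraMap_apply]
  have hint : IsIntegral A x := .of_pow finrank_pos (hx ▸ isIntegral_algebraMap)
  apply map_injective (algebraMap A K) (IsFractionRing.injective A K)
  rw [← minpoly.isIntegrallyClosed_eq_field_fractions' K hint,
    ← minpoly.eq_of_irreducible_of_monic
      (irreducible_X_pow_sub_C_of_root_adjoin_eq_top hroot htop) (by simp [hroot])
      (monic_X_pow_sub_C _ finrank_pos.ne')]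
  simp

variable [CommRing B] [IsDedekindDomain B] [Algebra B L] [Algebra A B] [IsTorsionFree A B]
  [IsScalarTower A B L] [IsIntegralClosure B A L] [Algebra.IsSeparable K L]

variable (K L) in
theorem finrank_mul_pow_mem_differentIdeal {a : A} {x : B}
    (hx : x ^ finrank K L = algebraMap A B a) (htop : K⟮algebraMap B L x⟯ = ⊤) :
    (finrank K L : B) * x ^ (finrank K L - 1) ∈ differentIdeal A B := by
  have hadj : Algebra.adjoin K {algebraMap B L x} = ⊤ :=
    (IntermediateField.adjoin_simple_eq_top_iff_of_isAlgebraic (.of_finite K _)).1 htop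
  have hmin : minpoly A x = X ^ finrank K L - C a := by
    rw [← minpoly.algebraMap_eq (IsIntegralClosure.algebraMap_injective B A L)]
    refine minpoly_eq_X_pow_finrank_sub_C ?_ htop
    rw [← map_pow, hx, ← IsScalarTower.algebraMap_apply]
  have h := aeval_derivative_mem_differentIdeal A K L x hadj
  rw [hmin] at h
  simpa [derivative_X_pow] using h

variable (K L) in
theorem finrank_mul_pow_mem_differentIdeal_of_mul_eq {I : Ideal A} {b e : A} {γ d : B}
    (hI : I ^ finrank K L = Ideal.span {b}) (hγ : γ ^ finrank K L = algebraMap A B b)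
    (hγ0 : γ ≠ 0) (htop : K⟮algebraMap B L γ⟯ = ⊤) (he : e ∈ I) (hd : d ≠ 0)
    (hde : d * γ = algebraMap A B e) :
    (finrank K L : B) * d ^ (finrank K L - 1) ∈ differentIdeal A B := by
  obtain ⟨t, ht⟩ := Ideal.mem_span_singleton'.1 (hI ▸ Ideal.pow_mem_pow he _)
  have hdt : d ^ finrank K L = algebraMap A B t :=
    mul_right_cancel₀ (pow_ne_zero (finrank K L) hγ0) <| by
      rw [← mul_pow, hde, hγ, ← map_pow, ← ht, map_mul]
  have hγd : algebraMap B L γ = algebraMap K L (algebraMap A K e) / algebraMap B L d := by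
    have hdL : algebraMap B L d ≠ 0 :=
      (map_ne_zero_iff _ (IsIntegralClosure.algebraMap_injective B A L)).2 hd
    rw [eq_div_iff hdL, ← map_mul, mul_comm, hde, ← IsScalarTower.algebraMap_apply,
      ← IsScalarTower.algebraMap_apply]
  refine finrank_mul_pow_mem_differentIdeal K L hdt (top_le_iff.1 ?_)
  rw [← htop, IntermediateField.adjoin_simple_le_iff, hγd]
  exact div_mem (IntermediateField.algebraMap_mem _ _)
    (IntermediateField.mem_adjoin_simple_self K _)

variable (K L) in
theorem finrank_mem_differentIdeal_of_pow_eq {I : Ideal A} {b : A} {γ : B}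
    (hI : I ^ finrank K L = Ideal.span {b}) (hγ : γ ^ finrank K L = algebraMap A B b)
    (hγ0 : γ ≠ 0) (htop : K⟮algebraMap B L γ⟯ = ⊤) :
    (finrank K L : B) ∈ differentIdeal A B := by
  let S : Set B := {d | d ≠ 0 ∧ ∃ e ∈ I, d * γ = algebraMap A B e}
  have hIγ := map_eq_span_singleton_of_pow_eq finrank_pos.ne' hI hγ
  have hle : I.map (algebraMap A B) ≤ Ideal.span S * Ideal.span {γ} := by
    refine Ideal.map_le_iff_le_comap.2 fun e he ↦ Ideal.mem_mul_span_singleton.2 ?_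
    obtain ⟨d, hd⟩ := Ideal.mem_span_singleton'.1 (hIγ ▸ Ideal.mem_map_of_mem _ he)
    by_cases hd0 : d = 0
    · exact ⟨d, hd0 ▸ zero_mem _, hd⟩
    · exact ⟨d, Ideal.subset_span ⟨hd0, e, he, hd⟩, hd⟩
  have hS : Ideal.span S = ⊤ := by
    obtain ⟨z, hz, hzγ⟩ :=
      Ideal.mem_mul_span_singleton.1 (hle (hIγ ▸ Ideal.mem_span_singleton_self γ))
    exact (Ideal.eq_top_iff_one _).2 (mul_left_eq_self₀.1 hzγ |>.resolve_right hγ0 ▸ hz)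
  have hcolon : (differentIdeal A B).colon {(finrank K L : B)} = ⊤ := by
    rw [← top_le_iff, ← Ideal.span_pow_eq_top S hS (finrank K L - 1), Ideal.span_le]
    rintro _ ⟨d, ⟨hd0, e, he, hde⟩, rfl⟩
    rw [SetLike.mem_coe, Submodule.mem_colon_singleton, smul_eq_mul, mul_comm]
    exact finrank_mul_pow_mem_differentIdeal_of_mul_eq K L hI hγ hγ0 htop he hd0 hde
  simpa using Submodule.mem_colon_singleton.1 ((Ideal.eq_top_iff_one _).1 hcolon)

end Different

theorem adjoin_simple_gen_eq_top (F : Type*) {E : Type*} [Field F] [Field E] [Algebra F E] (x : E) :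
    F⟮IntermediateField.AdjoinSimple.gen F x⟯ = ⊤ :=
  IntermediateField.lift_injective _ (by simp [IntermediateField.lift_top])

section FixedElements

variable {F E Ω : Type*} [Field F] [Field E] [Field Ω] [Algebra F E] [Algebra F Ω]

theorem mem_bot_of_finrank_prime_of_apply_eq (hE : (finrank F E).Prime) {σ τ : E →ₐ[F] Ω}
    (hστ : σ ≠ τ) {r : E} (hr : σ r = τ r) : r ∈ (⊥ : IntermediateField F E) := by
  have := IntermediateField.isSimpleOrder_of_finrank_prime F E hE
  have : FiniteDimensional F E := .of_finrank_pos hE.pos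
  refine IntermediateField.adjoin_simple_eq_bot_iff.1 ((eq_bot_or_eq_top F⟮r⟯).resolve_right
    fun htop ↦ hστ ?_)
  have hadj : Algebra.adjoin F {r} = ⊤ :=
    (IntermediateField.adjoin_simple_eq_top_iff_of_isAlgebraic (.of_finite F _)).1 htop
  exact AlgHom.ext_of_adjoin_eq_top hadj fun _ h ↦ Set.mem_singleton_iff.1 h ▸ hr

end FixedElements

theorem card_nthRootsFinset_le {S : Type*} [CommRing S] [IsDomain S] (m : ℕ) (a : S) :
    (nthRootsFinset m a).card ≤ m := by
  classical
  rw [nthRootsFinset_def]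
  exact (Multiset.toFinset_card_le _).trans (card_nthRoots m a)

section ClassRadical

variable {R K L : Type*} [CommRing R] [IsDedekindDomain R] [Field K] [Field L] [Algebra R K]
  [Algebra R L]

theorem ne_zero_of_pow_eq_span {m : ℕ} {I : (Ideal R)⁰} {b : R}
    (hI : (I : Ideal R) ^ m = Ideal.span {b}) : b ≠ 0 := by
  rintro rfl
  exact pow_ne_zero m (nonZeroDivisors.coe_ne_zero I) (by simpa using hI)

variable [IsFractionRing R K] in
theorem mk0_eq_mk0_of_pow_eq_span {m : ℕ} (hm : m ≠ 0) {I J : (Ideal R)⁰} {a b : R}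
    (hI : (I : Ideal R) ^ m = Ideal.span {a}) (hJ : (J : Ideal R) ^ m = Ideal.span {b}) {c : K}
    (hc : algebraMap R K a = c ^ m * algebraMap R K b) : ClassGroup.mk0 I = ClassGroup.mk0 J := by
  obtain ⟨p, q, hq, rfl⟩ := IsFractionRing.div_surjective (A := R) c
  have hqK : algebraMap R K q ≠ 0 := IsFractionRing.to_map_ne_zero_of_mem_nonZeroDivisors hq
  have hpq : q ^ m * a = p ^ m * b := by
    apply IsFractionRing.injective R K
    simp only [map_mul, map_pow, hc, div_pow]
    field_simp
  have hp : p ≠ 0 := by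
    rintro rfl
    apply ne_zero_of_pow_eq_span hI
    simpa [hm, nonZeroDivisors.ne_zero hq] using hpq
  have hmul : Ideal.span {q} * (I : Ideal R) = Ideal.span {p} * J := by
    apply pow_left_injective hm
    simp only [mul_pow, hI, hJ, Ideal.span_singleton_pow,
      Ideal.span_singleton_mul_span_singleton, hpq]
  exact ClassGroup.mk0_eq_mk0_iff.2 ⟨q, p, nonZeroDivisors.ne_zero hq, hp, hmul⟩

/-- `IsClassRadical m x g` says that `g` is an `m`-th root of a generator of `I ^ m`, for some
integral ideal `I` of class `x` whose `m`-th power is principal. -/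
def IsClassRadical (m : ℕ) (x : ClassGroup R) (g : L) : Prop :=
  ∃ (I : (Ideal R)⁰) (b : R), ClassGroup.mk0 I = x ∧ (I : Ideal R) ^ m = Ideal.span {b} ∧
    g ^ m = algebraMap R L b

namespace IsClassRadical

variable {m : ℕ} {x y : ClassGroup R} {g h : L}

theorem one : IsClassRadical m (1 : ClassGroup R) (1 : L) :=
  ⟨1, 1, map_one _, by simp, by simp⟩

theorem exists_of_pow_eq_one [IsAlgClosed L] (hm : m ≠ 0) (hx : x ^ m = 1) :
    ∃ g : L, IsClassRadical m x g := by
  obtain ⟨I, rfl⟩ := ClassGroup.mk0_surjective x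
  obtain ⟨b, hb⟩ : ((I ^ m : (Ideal R)⁰) : Ideal R).IsPrincipal := by
    rw [← ClassGroup.mk0_eq_one_iff (I ^ m).2, ← hx, ← map_pow]
  obtain ⟨g, hg⟩ := IsAlgClosed.exists_pow_nat_eq (algebraMap R L b) (Nat.pos_of_ne_zero hm)
  exact ⟨g, I, b, rfl, hb, hg⟩

theorem ne_zero [FaithfulSMul R L] (hm : m ≠ 0) (hg : IsClassRadical m x g) : g ≠ 0 := by
  rintro rfl
  obtain ⟨I, b, -, hI, hb⟩ := hg
  refine ne_zero_of_pow_eq_span hI (FaithfulSMul.algebraMap_injective R L ?_)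
  simpa [hm] using hb.symm

variable [Algebra K L] [IsScalarTower R K L]

theorem coe_iff {E : IntermediateField K L} {g : E} :
    IsClassRadical m x (g : L) ↔ IsClassRadical m x g := by
  have hcoe (b : R) : ((algebraMap R E b : E) : L) = algebraMap R L b := rfl
  simp only [IsClassRadical, ← hcoe, ← E.coe_pow, SetLike.coe_eq_coe]

variable (K) in
theorem exists_pow_eq_algebraMap (hg : IsClassRadical m x g) :
    ∃ b : K, g ^ m = algebraMap K L b := by
  obtain ⟨-, b, -, -, hb⟩ := hg
  exact ⟨algebraMap R K b, by rw [hb, ← IsScalarTower.algebraMap_apply]⟩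

variable [IsFractionRing R K]

theorem eq_of_eq_algebraMap_mul (hm : m ≠ 0) (hg : IsClassRadical m x g)
    (hh : IsClassRadical m y h) {c : K} (hc : g = algebraMap K L c * h) : x = y := by
  obtain ⟨I, a, rfl, hI, ha⟩ := hg
  obtain ⟨J, b, rfl, hJ, hb⟩ := hh
  refine mk0_eq_mk0_of_pow_eq_span (K := K) hm hI hJ (c := c) ((algebraMap K L).injective ?_)
  rw [map_mul, map_pow, ← IsScalarTower.algebraMap_apply, ← IsScalarTower.algebraMap_apply,
    ← ha, ← hb, hc, mul_pow]

variable (K) in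
theorem finrank_adjoin {p : ℕ} (hp : p.Prime) (hx : x ≠ 1) (hg : IsClassRadical p x g) :
    finrank K K⟮g⟯ = p := by
  obtain ⟨I, b, hIx, hI, hb⟩ := hg
  rw [IsScalarTower.algebraMap_apply R K L] at hb
  have hpow (c : K) (hc : c ^ p = algebraMap R K b) : x = 1 :=
    eq_of_eq_algebraMap_mul (K := K) hp.ne_zero ⟨I, b, hIx, hI, hc⟩ one (mul_one c).symm
  have hirr : Irreducible (X ^ p - C (algebraMap R K b)) :=
    X_pow_sub_C_irreducible_of_prime hp fun c hc ↦ hx (hpow c hc)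
  have hmin := minpoly.eq_of_irreducible_of_monic (x := g) hirr (by simp [hb])
    (monic_X_pow_sub_C _ hp.ne_zero)
  have hint : IsIntegral K g := .of_pow hp.pos (hb ▸ isIntegral_algebraMap)
  rw [IntermediateField.adjoin.finrank hint, ← hmin, natDegree_X_pow_sub_C]

section Embeddings

variable {Ω : Type*} [Field Ω] [Algebra K Ω] {σ τ : L →ₐ[K] Ω}

theorem algHom_apply_div_pow_eq_one (hm : m ≠ 0) (hg : IsClassRadical m x g) :
    (σ g / τ g) ^ m = 1 := by
  have := FaithfulSMul.trans R K L
  have hτ : τ (g ^ m) ≠ 0 := (map_ne_zero τ).2 (pow_ne_zero m (hg.ne_zero hm))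
  obtain ⟨b, hb⟩ := hg.exists_pow_eq_algebraMap K
  rw [div_pow, ← map_pow, ← map_pow, div_eq_one_iff_eq hτ, hb, σ.commutes, τ.commutes]

theorem eq_of_algHom_apply_div_eq (hL : (finrank K L).Prime) (hστ : σ ≠ τ) (hm : m ≠ 0)
    (hg : IsClassRadical m x g) (hh : IsClassRadical m y h) (heq : σ g / τ g = σ h / τ h) :
    x = y := by
  have := FaithfulSMul.trans R K L
  have hg0 := hg.ne_zero hm
  have hh0 := hh.ne_zero hm
  have hfix : σ (g / h) = τ (g / h) := by
    have hτg : τ g ≠ 0 := (map_ne_zero τ).2 hg0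
    have hτh : τ h ≠ 0 := (map_ne_zero τ).2 hh0
    have hσh : σ h ≠ 0 := (map_ne_zero σ).2 hh0
    rw [div_eq_div_iff hτg hτh] at heq
    rw [map_div₀, map_div₀, div_eq_div_iff hσh hτh, heq, mul_comm]
  obtain ⟨c, hc⟩ := IntermediateField.mem_bot.1 (mem_bot_of_finrank_prime_of_apply_eq hL hστ hfix)
  exact eq_of_eq_algebraMap_mul hm hg hh (by rw [hc, div_mul_cancel₀ _ hh0])

end Embeddings

variable (R K L) in
theorem ncard_le_of_finrank_prime [Algebra.IsSeparable K L] (hL : (finrank K L).Prime)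
    (hm : m ≠ 0) : {x : ClassGroup R | ∃ g : L, IsClassRadical m x g}.ncard ≤ m := by
  have : FiniteDimensional K L := .of_finrank_pos hL.pos
  have hcard : 1 < Fintype.card (L →ₐ[K] AlgebraicClosure L) := by
    rw [AlgHom.card]
    exact hL.one_lt
  obtain ⟨σ, τ, hστ⟩ := Fintype.exists_pair_of_one_lt_card hcard
  choose! g hg using fun (x : ClassGroup R) (hx : ∃ g : L, IsClassRadical m x g) ↦ hx
  have hmem (x) (hx : ∃ g : L, IsClassRadical m x g) :
      σ (g x) / τ (g x) ∈ (nthRootsFinset m (1 : AlgebraicClosure L) : Set _) :=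
    (mem_nthRootsFinset (Nat.pos_of_ne_zero hm) _).2 ((hg x hx).algHom_apply_div_pow_eq_one hm)
  refine (Set.ncard_le_ncard_of_injOn _ hmem fun x hx y hy heq ↦
    (hg x hx).eq_of_algHom_apply_div_eq hL hστ hm (hg y hy) heq).trans ?_
  rw [Set.ncard_coe_finset]
  exact card_nthRootsFinset_le m 1

end IsClassRadical

end ClassRadical

section NumberField

variable {K L : Type*} [Field K] [NumberField K] [Field L] [NumberField L] [Algebra K L]

theorem exists_natAbs_discr_eq_prime_pow_mul {p : ℕ} (hp : p.Prime)
    (h : (p : 𝓞 L) ∈ differentIdeal (𝓞 K) (𝓞 L)) :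
    ∃ j ≤ finrank ℚ L, (discr L).natAbs = p ^ j * (discr K).natAbs ^ finrank K L := by
  have hdvd : (differentIdeal (𝓞 K) (𝓞 L)).absNorm ∣ p ^ finrank ℚ L := by
    have := Ideal.absNorm_dvd_absNorm_of_le ((Ideal.span_singleton_le_iff_mem _).2 h)
    rwa [Ideal.absNorm_span_natCast, RingOfIntegers.rank] at this
  obtain ⟨j, hj, hnorm⟩ := (Nat.dvd_prime_pow hp).1 hdvd
  refine ⟨j, hj, ?_⟩
  rw [← hnorm]
  exact natAbs_discr_eq_absNorm_differentIdeal_mul_natAbs_discr_pow K (𝓞 K) L (𝓞 L)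

theorem IsClassRadical.exists_natAbs_discr_eq {p : ℕ} (hp : p.Prime) {x : ClassGroup (𝓞 K)}
    {g : L} (hg : IsClassRadical p x g) (hfin : finrank K L = p) (htop : K⟮g⟯ = ⊤) :
    ∃ j ≤ finrank ℚ L, (discr L).natAbs = p ^ j * (discr K).natAbs ^ p := by
  have hg0 := hg.ne_zero hp.ne_zero
  obtain ⟨I, b, -, hI, hb⟩ := hg
  subst hfin
  have hint : IsIntegral (𝓞 K) g := .of_pow hp.pos (hb ▸ isIntegral_algebraMap)
  obtain ⟨γ, rfl⟩ := IsIntegralClosure.isIntegral_iff (A := 𝓞 L) |>.1 hint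
  refine exists_natAbs_discr_eq_prime_pow_mul hp
    (finrank_mem_differentIdeal_of_pow_eq K L hI ?_ (by simpa using hg0) htop)
  apply RingOfIntegers.coe_injective
  rw [map_pow, hb, ← IsScalarTower.algebraMap_apply]

end NumberField

theorem absDisc_eq (K : IntermediateField ℚ (AlgebraicClosure ℚ)) [NumberField K] :
    absDisc K = (discr K).natAbs :=
  dif_pos (inferInstance : FiniteDimensional ℚ K)

/-- The set of subfields of `ℚ̄` of degree `m` and absolute discriminant `D`. -/
def fieldsOfDisc (m D : ℕ) : Set (IntermediateField ℚ (AlgebraicClosure ℚ)) :=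
  {L | finrank ℚ L = m ∧ absDisc L = D}

theorem finite_fieldsOfDisc {m : ℕ} (hm : m ≠ 0) (D : ℕ) : (fieldsOfDisc m D).Finite := by
  refine ((finite_of_discr_bdd (AlgebraicClosure ℚ) D).image Subtype.val).subset ?_
  rintro L ⟨hLm, hLD⟩
  have hL : FiniteDimensional ℚ L := .of_finrank_pos (by lia)
  have : NumberField L := ⟨⟩
  refine ⟨⟨L, hL⟩, ?_, rfl⟩
  change |discr L| ≤ D
  rw [← hLD, absDisc_eq, Int.natCast_natAbs]

section Torsion

variable {K : IntermediateField ℚ (AlgebraicClosure ℚ)} [NumberField K]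

theorem IsClassRadical.exists_adjoin_mem_fieldsOfDisc {p : ℕ} (hp : p.Prime) {x : ClassGroup (𝓞 K)}
    (hx : x ≠ 1) {g : AlgebraicClosure ℚ} (hg : IsClassRadical p x g) :
    ∃ j ≤ finrank ℚ K * p,
      K⟮g⟯.restrictScalars ℚ ∈ fieldsOfDisc (finrank ℚ K * p) (p ^ j * absDisc K ^ p) := by
  have hfin : finrank K K⟮g⟯ = p := hg.finrank_adjoin K hp hx
  have : FiniteDimensional K K⟮g⟯ := .of_finrank_pos (hfin ▸ hp.pos)
  have : Free K K⟮g⟯ := .of_divisionRing K _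
  have : NumberField K⟮g⟯ := .of_module_finite K _
  have : NumberField (K⟮g⟯.restrictScalars ℚ) := ‹NumberField K⟮g⟯›
  have hdeg : finrank ℚ K⟮g⟯ = finrank ℚ K * p := by rw [← finrank_mul_finrank ℚ K, hfin]
  have hgen : IsClassRadical p x (IntermediateField.AdjoinSimple.gen K g) := coe_iff.1 hg
  obtain ⟨j, hj, hdisc⟩ := hgen.exists_natAbs_discr_eq hp hfin
    (adjoin_simple_gen_eq_top K g)
  refine ⟨j, hdeg ▸ hj, hdeg, ?_⟩
  rw [absDisc_eq, absDisc_eq]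
  exact hdisc

theorem IsClassRadical.ncard_adjoin_eq_le {p : ℕ} (hp : p.Prime)
    (L : IntermediateField ℚ (AlgebraicClosure ℚ)) :
    {x : ClassGroup (𝓞 K) | x ≠ 1 ∧ ∃ g : AlgebraicClosure ℚ, IsClassRadical p x g ∧
      K⟮g⟯.restrictScalars ℚ = L}.ncard ≤ p := by
  obtain hempty | ⟨x₀, hx₀, g₀, hg₀, rfl⟩ := Set.eq_empty_or_nonempty {x : ClassGroup (𝓞 K) |
    x ≠ 1 ∧ ∃ g : AlgebraicClosure ℚ, IsClassRadical p x g ∧ K⟮g⟯.restrictScalars ℚ = L}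
  · simp [hempty]
  have hfin : (finrank K K⟮g₀⟯).Prime := hg₀.finrank_adjoin K hp hx₀ ▸ hp
  have : FiniteDimensional K K⟮g₀⟯ := .of_finrank_pos hfin.pos
  refine (Set.ncard_le_ncard ?_ (Set.toFinite _)).trans
    (ncard_le_of_finrank_prime (𝓞 K) K K⟮g₀⟯ hfin hp.ne_zero)
  rintro x ⟨-, g, hg, hgL⟩
  have hmem : g ∈ K⟮g₀⟯ :=
    IntermediateField.restrictScalars_injective ℚ hgL ▸ IntermediateField.mem_adjoin_simple_self K g
  exact ⟨⟨g, hmem⟩, coe_iff.1 hg⟩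

theorem ncard_nontrivial_torsion_le {p : ℕ} (hp : p.Prime) :
    {x : ClassGroup (𝓞 K) | x ^ p = 1 ∧ x ≠ 1}.ncard ≤
      p * ∑ j ∈ Finset.range (finrank ℚ K * p + 1),
        (fieldsOfDisc (finrank ℚ K * p) (p ^ j * absDisc K ^ p)).ncard := by
  classical
  have hfin (j : ℕ) := finite_fieldsOfDisc (Nat.mul_ne_zero (finrank_pos (R := ℚ) (M := K)).ne'
    hp.ne_zero) (p ^ j * absDisc K ^ p)
  let fields := (Finset.range (finrank ℚ K * p + 1)).biUnion fun j ↦ (hfin j).toFinset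
  choose! g hg using fun (x : ClassGroup (𝓞 K)) (hx : x ^ p = 1) ↦
    IsClassRadical.exists_of_pow_eq_one (L := AlgebraicClosure ℚ) hp.ne_zero hx
  let f (x : ClassGroup (𝓞 K)) := K⟮g x⟯.restrictScalars ℚ
  let s := Finset.univ.filter fun x : ClassGroup (𝓞 K) ↦ x ^ p = 1 ∧ x ≠ 1
  have hmaps : ∀ x ∈ s, f x ∈ fields := fun x hx ↦ by
    obtain ⟨hxp, hx1⟩ := (Finset.mem_filter.1 hx).2
    obtain ⟨j, hj, hmem⟩ := (hg x hxp).exists_adjoin_mem_fieldsOfDisc hp hx1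
    exact Finset.mem_biUnion.2 ⟨j, Finset.mem_range_succ_iff.2 hj, (hfin j).mem_toFinset.2 hmem⟩
  have hfibre : ∀ L ∈ fields, (s.filter (f · = L)).card ≤ p := fun L _ ↦ by
    rw [← Set.ncard_coe_finset]
    refine (Set.ncard_le_ncard (fun x hx ↦ ?_) (Set.toFinite _)).trans
      (IsClassRadical.ncard_adjoin_eq_le (K := K) hp L)
    obtain ⟨hxs, hxL⟩ := Finset.mem_filter.1 hx
    obtain ⟨hxp, hx1⟩ := (Finset.mem_filter.1 hxs).2
    exact ⟨hx1, g x, hg x hxp, hxL⟩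
  calc {x : ClassGroup (𝓞 K) | x ^ p = 1 ∧ x ≠ 1}.ncard
      = s.card := by rw [← Set.ncard_coe_finset]; simp [s]
    _ ≤ p * fields.card := Finset.card_le_mul_card_image_of_maps_to hmaps p hfibre
    _ ≤ p * ∑ j ∈ Finset.range (finrank ℚ K * p + 1), (hfin j).toFinset.card := by
      gcongr
      exact Finset.card_biUnion_le
    _ = _ := by simp only [Set.ncard_eq_toFinset_card _ (hfin _)]

variable (K) in
theorem clTors_le {p : ℕ} (hp : p.Prime) :
    clTors K p ≤ 1 + p * ∑ j ∈ Finset.range (finrank ℚ K * p + 1),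
      (fieldsOfDisc (finrank ℚ K * p) (p ^ j * absDisc K ^ p)).ncard := by
  have hsub : {x : ClassGroup (𝓞 K) | x ^ p = 1} ⊆ insert 1 {x | x ^ p = 1 ∧ x ≠ 1} :=
    fun x hx ↦ or_iff_not_imp_left.2 fun hx1 ↦ ⟨hx, hx1⟩
  calc clTors K p
      = {x : ClassGroup (𝓞 K) | x ^ p = 1}.ncard := rfl
    _ ≤ (insert 1 {x : ClassGroup (𝓞 K) | x ^ p = 1 ∧ x ≠ 1}).ncard :=
      Set.ncard_le_ncard hsub (Set.toFinite _)
    _ ≤ {x : ClassGroup (𝓞 K) | x ^ p = 1 ∧ x ≠ 1}.ncard + 1 := Set.ncard_insert_le _ _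
    _ ≤ _ := by
      rw [add_comm]
      gcongr
      exact ncard_nontrivial_torsion_le hp

variable (K) in
theorem one_lt_absDisc (hK : 1 < finrank ℚ K) : 1 < absDisc K := by
  have := abs_discr_gt_two hK
  rw [Int.abs_eq_natAbs, ← absDisc_eq] at this
  lia

end Torsion

section Growth

variable {n p : ℕ} {C δ : ℝ}

theorem apply_pow_mul_pow_le {N : ℕ → ℝ} (hC : 0 ≤ C) (hδ : 0 ≤ δ)
    (hN : ∀ D : ℕ, 1 < D → N D ≤ C * (D : ℝ) ^ δ) (hp : p ≠ 0) {d j m : ℕ} (hd : 1 < d)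
    (hj : j ≤ m) :
    N (p ^ j * d ^ p) ≤ C * ((p : ℝ) ^ m) ^ δ * (d : ℝ) ^ (p * δ) := by
  have hD : 1 < p ^ j * d ^ p :=
    (Nat.one_lt_pow hp hd).trans_le
      (Nat.le_mul_of_pos_left _ (pow_pos (Nat.pos_of_ne_zero hp) j))
  have hp1 : (1 : ℝ) ≤ p := mod_cast Nat.one_le_iff_ne_zero.2 hp
  calc N (p ^ j * d ^ p) ≤ C * ((p ^ j * d ^ p : ℕ) : ℝ) ^ δ := hN _ hD
    _ = C * ((p : ℝ) ^ j) ^ δ * (d : ℝ) ^ (p * δ) := by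
      push_cast
      rw [Real.mul_rpow (by positivity) (by positivity), ← mul_assoc,
        Real.rpow_mul (by positivity), Real.rpow_natCast]
    _ ≤ C * ((p : ℝ) ^ m) ^ δ * (d : ℝ) ^ (p * δ) := by gcongr

theorem exists_clTors_le_mul_rpow (hn : 1 < n) (hp : p.Prime) (hδ : 0 ≤ δ)
    (hC : ∀ D : ℕ, 1 < D → ((fieldsOfDisc (n * p) D).ncard : ℝ) ≤ C * (D : ℝ) ^ δ) :
    ∃ C' : ℝ, ∀ K : IntermediateField ℚ (AlgebraicClosure ℚ), finrank ℚ K = n →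
      (clTors K p : ℝ) ≤ C' * (absDisc K : ℝ) ^ (p * δ) := by
  have hC0 : 0 ≤ C := nonneg_of_mul_nonneg_left
    ((Nat.cast_nonneg _).trans (hC 2 one_lt_two)) (by positivity)
  let B : ℝ := C * ((p : ℝ) ^ (n * p)) ^ δ
  refine ⟨1 + p * ((n * p + 1 : ℕ) * B), ?_⟩
  rintro K rfl
  have : FiniteDimensional ℚ K := .of_finrank_pos (by lia)
  have : NumberField K := ⟨⟩
  have hd := one_lt_absDisc K hn
  set X : ℝ := (absDisc K : ℝ) ^ (p * δ)
  have hX : 1 ≤ X := Real.one_le_rpow (mod_cast hd.le) (by positivity)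
  have hterm (j) (hj : j ∈ Finset.range (finrank ℚ K * p + 1)) :
      ((fieldsOfDisc (finrank ℚ K * p) (p ^ j * absDisc K ^ p)).ncard : ℝ) ≤ B * X :=
    apply_pow_mul_pow_le (N := fun D ↦ ((fieldsOfDisc (finrank ℚ K * p) D).ncard : ℝ))
      hC0 hδ hC hp.ne_zero hd (Finset.mem_range_succ_iff.1 hj)
  calc (clTors K p : ℝ)
      ≤ 1 + p * ∑ j ∈ Finset.range (finrank ℚ K * p + 1),
          ((fieldsOfDisc (finrank ℚ K * p) (p ^ j * absDisc K ^ p)).ncard : ℝ) := by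
        exact_mod_cast clTors_le K hp
    _ ≤ X + p * ∑ _j ∈ Finset.range (finrank ℚ K * p + 1), B * X := by
        gcongr with j hj
        exact hterm j hj
    _ = (1 + p * ((finrank ℚ K * p + 1 : ℕ) * B)) * X := by
        rw [Finset.sum_const, Finset.card_range, nsmul_eq_mul]
        ring

end Growth

/-- Theorem 1.6 / `D_{nℓ}(Δ) → C_{n,ℓ}(ℓΔ)`. If the number of degree-`nℓ`
fields of fixed discriminant `D > 1` is `≪_ε D^{Δ+ε}`, then every degree-`n` field `K`
satisfies `|Cl_K[ℓ]| ≪_ε D_K^{ℓΔ+ε}`. -/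
theorem discMultiplicity_implies_torsion_bound
    (n : ℕ) (hn : 2 ≤ n) (ℓ : ℕ) (hℓ : ℓ.Prime) (Δ : ℝ) (hΔ : 0 ≤ Δ)
    (hD : ∀ ε : ℝ, 0 < ε → ∃ C : ℝ, ∀ D : ℕ, 1 < D →
      (({L : IntermediateField ℚ (AlgebraicClosure ℚ) |
          Module.finrank ℚ L = n * ℓ ∧ absDisc L = D}).ncard : ℝ)
        ≤ C * (D : ℝ) ^ (Δ + ε)) :
    ∀ ε : ℝ, 0 < ε → ∃ C' : ℝ,
      ∀ K : IntermediateField ℚ (AlgebraicClosure ℚ), Module.finrank ℚ K = n →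
        (clTors K ℓ : ℝ) ≤ C' * (absDisc K : ℝ) ^ ((ℓ : ℝ) * Δ + ε) := by
  intro ε hε
  have hℓ0 : (0 : ℝ) < ℓ := mod_cast hℓ.pos
  obtain ⟨C, hC⟩ := hD (ε / ℓ) (by positivity)
  have hδ : (ℓ : ℝ) * (Δ + ε / ℓ) = ℓ * Δ + ε := by field_simp
  rw [← hδ]
  exact exists_clTors_le_mul_rpow hn hℓ (by positivity) hC
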